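/- Let n ≥ 1 and let ψ ∈ ℂ^(2^n) be any unit vector. If 0 ≤ ε < 1/(1 + 2^(2n−1)), then the pseudo-pure state ρ = ε ψψ* + (1−ε) 2^{−n} I is separable as an n-qubit state, regardless of ψ. -/

import Mathlib

open Matrix
open scoped ComplexOrder

/-- A density matrix: positive semidefinite with trace 1. -/
def IsDensityMatrix {m : Type} [Fintype m] [DecidableEq m] (ρ : Matrix m m ℂ) : Prop :=
  ρ.PosSemidef ∧ ρ.trace = 1

/-- An `n`-qubit product state: a tensor (Kronecker) product `ρ₁ ⊗ ⋯ ⊗ ρₙ` of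
single-qubit density matrices, expressed entrywise on the index type `Fin n → Fin 2`. -/
def IsProductState (n : ℕ) (ρ : Matrix (Fin n → Fin 2) (Fin n → Fin 2) ℂ) : Prop :=
  ∃ σ : Fin n → Matrix (Fin 2) (Fin 2) ℂ,
    (∀ i, IsDensityMatrix (σ i)) ∧ ∀ x y, ρ x y = ∏ i, σ i (x i) (y i)

/-- An `n`-qubit state is separable if it is a finite convex combination of product states. -/
def IsSeparableState (n : ℕ) (ρ : Matrix (Fin n → Fin 2) (Fin n → Fin 2) ℂ) : Prop :=
  ∃ (k : ℕ) (p : Fin k → ℝ) (σ : Fin k → Matrix (Fin n → Fin 2) (Fin n → Fin 2) ℂ),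
    (∀ j, 0 ≤ p j) ∧ (∑ j, p j = 1) ∧ (∀ j, IsProductState n (σ j)) ∧
      ρ = ∑ j, (p j : ℂ) • σ j

/-!
Let `P` run over the six pure qubit states at the vertices of an octahedron in the Bloch ball.
Completeness of the Pauli matrices says that every `2 × 2` matrix is `A = ∑ tr (A Q) P` with
`Q = P - 1/3`. Taking tensor powers, every `n`-qubit matrix `τ` is the combination of the product
states `P_J = P_{J 1} ⊗ ⋯ ⊗ P_{J n}` with coefficients `tr (τ Q_J)`, while `2⁻ⁿ I` is their uniform
mixture, with all weights `6⁻ⁿ`. The eigenvalues of `Q` are `2/3` and `-1/3`, so the smallest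
eigenvalue of `Q_J` is `-(1/3) (2/3)ⁿ⁻¹`, and for a density matrix `τ` the coefficients of
`ε τ + (1 - ε) 2⁻ⁿ I` are at least `6⁻ⁿ (1 - ε (1 + 2²ⁿ⁻¹))`.
-/

section PiKronecker

variable {ι l m k R : Type*} [Fintype ι] [CommSemiring R]

/-- The Kronecker product `⨂ᵢ Mᵢ` of a finite family of matrices of the same shape, as a multilinear
map. Its rows and columns are indexed by families of row and column indices of the factors. -/
noncomputable def piKronecker :
    MultilinearMap R (fun _ : ι ↦ Matrix l m R) (Matrix (ι → l) (ι → m) R) :=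
  (Matrix.ofLinearEquiv R).toLinearMap.compMultilinearMap <|
    MultilinearMap.pi fun x ↦ MultilinearMap.pi fun y ↦
      (MultilinearMap.mkPiAlgebra R ι R).compLinearMap fun i ↦ entryLinearMap R R (x i) (y i)

theorem piKronecker_apply (M : ι → Matrix l m R) (x : ι → l) (y : ι → m) :
    piKronecker M x y = ∏ i, M i (x i) (y i) := by
  simp [piKronecker]

theorem piKronecker_mul_piKronecker [DecidableEq ι] [Fintype m] (M : ι → Matrix l m R)
    (N : ι → Matrix m k R) : piKronecker M * piKronecker N = piKronecker fun i ↦ M i * N i := by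
  ext x y
  simp only [mul_apply, piKronecker_apply, ← Finset.prod_mul_distrib, Fintype.prod_sum]

theorem conjTranspose_piKronecker [StarRing R] (M : ι → Matrix l m R) :
    (piKronecker M)ᴴ = piKronecker fun i ↦ (M i)ᴴ := by
  ext x y
  simp [piKronecker_apply]

theorem piKronecker_single [DecidableEq l] [DecidableEq m] (x : ι → l) (y : ι → m) :
    piKronecker (fun i ↦ single (x i) (y i) (1 : R)) = single x y 1 := by
  ext x' y'
  simp [piKronecker_apply, single_apply, Fintype.prod_boole, forall_and, ← funext_iff]

theorem piKronecker_one [DecidableEq m] :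
    piKronecker (fun _ : ι ↦ (1 : Matrix m m R)) = 1 := by
  ext x y
  simp [piKronecker_apply, one_apply, Fintype.prod_boole, ← funext_iff]

theorem trace_piKronecker [DecidableEq ι] [Fintype m] (M : ι → Matrix m m R) :
    (piKronecker M).trace = ∏ i, (M i).trace := by
  simp only [trace, diag_apply, piKronecker_apply, Fintype.prod_sum]

theorem piKronecker_smul_add_smul [DecidableEq ι] (a b : R) (M N : ι → Matrix l m R) :
    piKronecker (fun i ↦ a • M i + b • N i) =
      ∑ s : Finset ι, (a ^ s.card * b ^ sᶜ.card) • piKronecker (s.piecewise M N) := by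
  have piecewise_smul (s : Finset ι) :
      s.piecewise (fun i ↦ a • M i) (fun i ↦ b • N i) =
        fun i ↦ s.piecewise (fun _ ↦ a) (fun _ ↦ b) i • s.piecewise M N i := by
    ext1 i
    by_cases hi : i ∈ s <;> simp [hi]
  calc piKronecker (fun i ↦ a • M i + b • N i)
    _ = ∑ s : Finset ι, piKronecker (s.piecewise (fun i ↦ a • M i) fun i ↦ b • N i) :=
      piKronecker.map_add_univ _ _
    _ = _ := by
      simp [piecewise_smul, MultilinearMap.map_smul_univ, Finset.prod_piecewise,
        Finset.compl_eq_univ_sdiff]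

end PiKronecker

section DualFrame

variable {ι κ m R : Type*} [Fintype κ] [Fintype m] [CommSemiring R]

/-- `Q` is a frame of matrices dual to `P` for the pairing `(A, B) ↦ tr (A B)`: every matrix `A` is
recovered as `∑ⱼ tr (A Qⱼ) Pⱼ`. -/
def IsDualFrame (Q P : κ → Matrix m m R) : Prop :=
  ∀ A : Matrix m m R, ∑ j, (A * Q j).trace • P j = A

theorem isDualFrame_piKronecker [Fintype ι] [DecidableEq ι] {Q P : κ → Matrix m m R}
    (h : IsDualFrame Q P) :
    IsDualFrame (fun J : ι → κ ↦ piKronecker fun i ↦ Q (J i))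
      (fun J ↦ piKronecker fun i ↦ P (J i)) := by
  classical
  intro A
  induction A using Matrix.induction_on' with
  | h_zero => simp
  | h_add A B hA hB => simp only [add_mul, trace_add, add_smul, Finset.sum_add_distrib, hA, hB]
  | h_std_basis x y c =>
    let E (i : ι) : Matrix m m R := single (x i) (y i) 1
    suffices ∑ J : ι → κ, (piKronecker E * piKronecker fun i ↦ Q (J i)).trace •
        piKronecker (fun i ↦ P (J i)) = piKronecker E by
      have single_eq : single x y c = c • piKronecker E := by simp [E, piKronecker_single]
      simp only [single_eq, smul_mul_assoc, trace_smul, smul_assoc, ← Finset.smul_sum, this]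
    simp only [piKronecker_mul_piKronecker, trace_piKronecker, ← MultilinearMap.map_smul_univ]
    rw [← MultilinearMap.map_sum _ fun i j ↦ (E i * Q j).trace • P j]
    simp only [h _]

end DualFrame

theorem neg_mul_pow_le_pow_mul_neg_pow {R : Type*} [CommRing R] [PartialOrder R] [IsOrderedRing R]
    {a b : R} (hb : 0 ≤ b) (hba : b ≤ a) {k l n : ℕ} (hkl : k + l = n + 1) :
    -(b * a ^ n) ≤ a ^ k * (-b) ^ l := by
  have ha : 0 ≤ a := hb.trans hba
  rcases l.even_or_odd with hl | hl
  · calc -(b * a ^ n) ≤ 0 := by simpa using mul_nonneg hb (pow_nonneg ha n)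
      _ ≤ a ^ k * (-b) ^ l := by rw [hl.neg_pow]; positivity
  · obtain ⟨l, rfl⟩ : ∃ l', l = l' + 1 := Nat.exists_eq_add_one.mpr hl.pos
    obtain rfl : n = k + l := by omega
    calc -(b * a ^ (k + l)) ≤ -(b * (a ^ k * b ^ l)) := by rw [pow_add]; gcongr
      _ = a ^ k * (-b) ^ (l + 1) := by rw [hl.neg_pow]; ring

section LoewnerOrder

open scoped MatrixOrder

variable {𝕜 ι m : Type*} [RCLike 𝕜]

theorem trace_mul_nonneg [Fintype m] {A B : Matrix m m 𝕜} (hA : 0 ≤ A) (hB : 0 ≤ B) :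
    0 ≤ (A * B).trace := by
  classical
  obtain ⟨C, rfl⟩ := CStarAlgebra.nonneg_iff_eq_star_mul_self.mp hA
  rw [mul_assoc, trace_mul_comm]
  exact (hB.posSemidef.mul_mul_conjTranspose_same C).trace_nonneg

variable [Fintype ι] [Finite m]

theorem piKronecker_nonneg {M : ι → Matrix m m 𝕜} (hM : ∀ i, 0 ≤ M i) : 0 ≤ piKronecker M := by
  classical
  cases nonempty_fintype m
  choose C hC using fun i ↦ CStarAlgebra.nonneg_iff_eq_star_mul_self.mp (hM i)
  have : piKronecker M = (piKronecker C)ᴴ * piKronecker C := by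
    rw [conjTranspose_piKronecker, piKronecker_mul_piKronecker]
    exact congrArg piKronecker (funext hC)
  exact this ▸ (posSemidef_conjTranspose_mul_self _).nonneg

variable [DecidableEq m]

-- Expanding the product writes it in terms of the `2 ^ (n + 1)` products of factors `E i` or
-- `1 - E i`, which are positive and add up to `1`; the coefficients are `a ^ k * (-b) ^ l` with
-- `k + l = n + 1`.
theorem neg_smul_one_le_piKronecker {a b : 𝕜} (hb : 0 ≤ b) (hba : b ≤ a) {n : ℕ}
    (hι : Fintype.card ι = n + 1) {E : ι → Matrix m m 𝕜} (hE₀ : ∀ i, 0 ≤ E i)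
    (hE₁ : ∀ i, E i ≤ 1) :
    -(b * a ^ n) • 1 ≤ piKronecker fun i ↦ a • E i + (-b) • (1 - E i) := by
  classical
  cases nonempty_fintype m
  let F (s : Finset ι) := piKronecker (s.piecewise E fun i ↦ 1 - E i)
  have F_nonneg (s : Finset ι) : 0 ≤ F s := piKronecker_nonneg fun i ↦ by
    by_cases hi : i ∈ s <;> simp [hi, hE₀, hE₁]
  have sum_F : ∑ s, F s = 1 := by
    simpa [piKronecker_one] using (piKronecker_smul_add_smul 1 1 E fun i ↦ 1 - E i).symm
  rw [piKronecker_smul_add_smul, ← sum_F, Finset.smul_sum]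
  refine Finset.sum_le_sum fun s _ ↦ smul_le_smul_of_nonneg_right ?_ (F_nonneg s)
  exact neg_mul_pow_le_pow_mul_neg_pow hb hba (by rw [s.card_add_card_compl, hι])

end LoewnerOrder

section Separable

open scoped MatrixOrder in
theorem IsDensityMatrix.le_trace_mul {m : Type} [Fintype m] [DecidableEq m] {τ B : Matrix m m ℂ}
    (hτ : IsDensityMatrix τ) {c : ℂ} (h : c • 1 ≤ B) : c ≤ (τ * B).trace := by
  simpa [mul_sub, hτ.2] using trace_mul_nonneg hτ.1.nonneg (sub_nonneg.mpr h)

theorem isDensityMatrix_vecMulVec_star {m : Type} [Fintype m] [DecidableEq m] {ψ : m → ℂ}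
    (hψ : ∑ x, ‖ψ x‖ ^ 2 = 1) : IsDensityMatrix (vecMulVec ψ (star ψ)) := by
  refine ⟨posSemidef_vecMulVec_self_star ψ, ?_⟩
  simp only [trace_vecMulVec, dotProduct, Pi.star_apply, RCLike.star_def, Complex.mul_conj']
  exact_mod_cast hψ

variable {n : ℕ}

theorem isProductState_piKronecker {σ : Fin n → Matrix (Fin 2) (Fin 2) ℂ}
    (hσ : ∀ i, IsDensityMatrix (σ i)) : IsProductState n (piKronecker σ) :=
  ⟨σ, hσ, piKronecker_apply σ⟩

theorem IsProductState.trace_eq_one {ρ : Matrix (Fin n → Fin 2) (Fin n → Fin 2) ℂ}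
    (hρ : IsProductState n ρ) : ρ.trace = 1 := by
  obtain ⟨σ, hσ, hρσ⟩ := hρ
  obtain rfl : ρ = piKronecker σ := by ext x y; rw [hρσ, piKronecker_apply]
  simp [trace_piKronecker, (hσ _).2]

theorem isSeparableState_sum_smul {κ : Type*} [Fintype κ] {w : κ → ℂ}
    {σ : κ → Matrix (Fin n → Fin 2) (Fin n → Fin 2) ℂ} (hw : ∀ j, 0 ≤ w j)
    (hσ : ∀ j, IsProductState n (σ j)) (htrace : (∑ j, w j • σ j).trace = 1) :
    IsSeparableState n (∑ j, w j • σ j) := by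
  have ofReal_re_w (j : κ) : ((w j).re : ℂ) = w j := (Complex.eq_re_of_ofReal_le (hw j)).symm
  have sum_w : ∑ j, w j = 1 := by
    simpa [trace_sum, trace_smul, (hσ _).trace_eq_one] using htrace
  let e := (Fintype.equivFin κ).symm
  refine ⟨Fintype.card κ, fun j ↦ (w (e j)).re, σ ∘ e, fun j ↦ (Complex.nonneg_iff.mp (hw _)).1, ?_,
    fun j ↦ hσ _, ?_⟩
  · rw [e.sum_comp fun j ↦ (w j).re, ← Complex.re_sum, sum_w, Complex.one_re]
  · simp only [ofReal_re_w, Function.comp_apply]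
    exact (e.sum_comp fun j ↦ w j • σ j).symm

end Separable

section Octahedron

/-- The Pauli matrices `σ_x`, `σ_y`, `σ_z`. -/
def pauli : Fin 3 → Matrix (Fin 2) (Fin 2) ℂ :=
  ![!![0, 1; 1, 0], !![0, -Complex.I; Complex.I, 0], !![1, 0; 0, -1]]

theorem conjTranspose_pauli (k : Fin 3) : (pauli k)ᴴ = pauli k := by
  ext x y
  fin_cases k <;> fin_cases x <;> fin_cases y <;> simp [pauli]

theorem pauli_mul_self (k : Fin 3) : pauli k * pauli k = 1 := by
  fin_cases k <;> simp [pauli, one_fin_two]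

theorem trace_pauli (k : Fin 3) : (pauli k).trace = 0 := by
  fin_cases k <;> simp [pauli, trace_fin_two]

theorem trace_smul_one_add_sum_pauli (A : Matrix (Fin 2) (Fin 2) ℂ) :
    A.trace • 1 + ∑ k, (A * pauli k).trace • pauli k = (2 : ℂ) • A := by
  ext x y
  fin_cases x <;> fin_cases y <;>
    simp [pauli, Fin.sum_univ_three, trace_fin_two, mul_apply] <;>
    grind [Complex.I_mul_I]

/-- The six eigenprojections `(1 ± σ_k) / 2` of the Pauli matrices, whose Bloch vectors are the
vertices of a regular octahedron. -/
noncomputable def octahedronState (j : Fin 3 × ℤˣ) : Matrix (Fin 2) (Fin 2) ℂ :=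
  (1 / 2 : ℂ) • (1 + (j.2 : ℂ) • pauli j.1)

theorem octahedronState_one (k : Fin 3) :
    octahedronState (k, 1) = (1 / 2 : ℂ) • (1 + pauli k) := by
  simp [octahedronState]

theorem octahedronState_neg_one (k : Fin 3) :
    octahedronState (k, -1) = (1 / 2 : ℂ) • (1 - pauli k) := by
  simp [octahedronState, sub_eq_add_neg]

theorem sum_intUnits {M : Type*} [AddCommMonoid M] (f : ℤˣ → M) : ∑ s, f s = f 1 + f (-1) :=
  Finset.sum_pair (by decide)

theorem isIdempotentElem_octahedronState (j : Fin 3 × ℤˣ) :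
    IsIdempotentElem (octahedronState j) := by
  obtain ⟨k, s⟩ := j
  rcases Int.units_eq_one_or s with rfl | rfl <;>
  · simp only [IsIdempotentElem, octahedronState_one, octahedronState_neg_one, smul_mul_smul,
      mul_add, add_mul, mul_sub, sub_mul, one_mul, mul_one, pauli_mul_self]
    module

theorem isSelfAdjoint_octahedronState (j : Fin 3 × ℤˣ) : IsSelfAdjoint (octahedronState j) := by
  simp [isSelfAdjoint_iff, star_eq_conjTranspose, octahedronState, conjTranspose_pauli]

theorem isStarProjection_octahedronState (j : Fin 3 × ℤˣ) :
    IsStarProjection (octahedronState j) :=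
  ⟨isIdempotentElem_octahedronState j, isSelfAdjoint_octahedronState j⟩

theorem trace_octahedronState (j : Fin 3 × ℤˣ) : (octahedronState j).trace = 1 := by
  simp [octahedronState, trace_pauli]

open scoped MatrixOrder in
theorem isDensityMatrix_octahedronState (j : Fin 3 × ℤˣ) : IsDensityMatrix (octahedronState j) :=
  ⟨(isStarProjection_octahedronState j).nonneg.posSemidef, trace_octahedronState j⟩

theorem sum_octahedronState : ∑ j, octahedronState j = (3 : ℂ) • 1 := by
  simp only [Fintype.sum_prod_type, sum_intUnits, octahedronState_one, octahedronState_neg_one,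
    Fin.sum_univ_three]
  module

/-- The frame dual to `octahedronState`, whose trace pairings with `τ` give the coefficients of `τ`
in terms of the octahedron states. -/
noncomputable def octahedronDual (j : Fin 3 × ℤˣ) : Matrix (Fin 2) (Fin 2) ℂ :=
  octahedronState j - (1 / 3 : ℂ) • 1

theorem isDualFrame_octahedronDual : IsDualFrame octahedronDual octahedronState := by
  intro A
  have sum_signs (k : Fin 3) :
      ∑ s : ℤˣ, (A * octahedronDual (k, s)).trace • octahedronState (k, s) =
        (1 / 6 : ℂ) • A.trace • 1 + (1 / 2 : ℂ) • (A * pauli k).trace • pauli k := by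
    simp only [sum_intUnits, octahedronDual, octahedronState_one, octahedronState_neg_one, mul_add,
      mul_sub, mul_smul_comm, mul_one, trace_add, trace_sub, trace_smul]
    module
  calc ∑ j, (A * octahedronDual j).trace • octahedronState j
    _ = (1 / 2 : ℂ) • (A.trace • 1 + ∑ k, (A * pauli k).trace • pauli k) := by
      simp only [Fintype.sum_prod_type, sum_signs, Finset.sum_add_distrib, Finset.sum_const,
        Finset.card_univ, Fintype.card_fin, ← Finset.smul_sum]
      module
    _ = A := by
      rw [trace_smul_one_add_sum_pauli]
      module

variable {n : ℕ}

theorem sum_piKronecker_octahedronState :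
    ∑ J : Fin n → Fin 3 × ℤˣ, piKronecker (fun i ↦ octahedronState (J i)) = (3 : ℂ) ^ n • 1 := by
  rw [← MultilinearMap.map_sum _ fun _ ↦ octahedronState]
  simp [sum_octahedronState, MultilinearMap.map_smul_univ, piKronecker_one]

open scoped MatrixOrder in
theorem neg_smul_one_le_piKronecker_octahedronDual (J : Fin (n + 1) → Fin 3 × ℤˣ) :
    -(1 / 3 * (2 / 3) ^ n : ℂ) • 1 ≤ piKronecker fun i ↦ octahedronDual (J i) := by
  have octahedronDual_eq (j : Fin 3 × ℤˣ) : octahedronDual j =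
      (2 / 3 : ℂ) • octahedronState j + (-(1 / 3) : ℂ) • (1 - octahedronState j) := by
    rw [octahedronDual]
    module
  simp only [octahedronDual_eq]
  have third_le : (1 / 3 : ℂ) ≤ 2 / 3 := by gcongr; norm_num
  exact neg_smul_one_le_piKronecker (by positivity) third_le (Fintype.card_fin _)
    (fun i ↦ (isStarProjection_octahedronState (J i)).nonneg)
    (fun i ↦ (isStarProjection_octahedronState (J i)).le_one)

/-- The coefficient of `⨂ᵢ octahedronState (Jᵢ)` in the expansion of `ε τ + (1 - ε) 2⁻ⁿ I`. -/
noncomputable def octahedronWeight (ε : ℝ) (τ : Matrix (Fin n → Fin 2) (Fin n → Fin 2) ℂ)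
    (J : Fin n → Fin 3 × ℤˣ) : ℂ :=
  ε * (τ * piKronecker fun i ↦ octahedronDual (J i)).trace + (1 - ε) / 6 ^ n

theorem sum_octahedronWeight_smul (ε : ℝ) (τ : Matrix (Fin n → Fin 2) (Fin n → Fin 2) ℂ) :
    ∑ J, octahedronWeight ε τ J • piKronecker (fun i ↦ octahedronState (J i)) =
      (ε : ℂ) • τ + (((1 - ε) / 2 ^ n : ℝ) : ℂ) • 1 := by
  have six_pow : ((1 - ε) / 6 ^ n * 3 ^ n : ℂ) = ((1 - ε) / 2 ^ n : ℝ) := by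
    rw [show (6 : ℂ) = 2 * 3 by norm_num, mul_pow]
    push_cast
    field_simp
  simp only [octahedronWeight, add_smul, mul_smul, Finset.sum_add_distrib, ← Finset.smul_sum,
    isDualFrame_piKronecker isDualFrame_octahedronDual τ, sum_piKronecker_octahedronState]
  rw [smul_smul, six_pow]

theorem octahedronWeight_nonneg (hn : 1 ≤ n) {ε : ℝ} (hε₀ : 0 ≤ ε)
    (hε : ε ≤ 1 / (1 + 2 ^ (2 * n - 1))) {τ : Matrix (Fin n → Fin 2) (Fin n → Fin 2) ℂ}
    (hτ : IsDensityMatrix τ) (J : Fin n → Fin 3 × ℤˣ) : 0 ≤ octahedronWeight ε τ J := by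
  obtain ⟨n, rfl⟩ := Nat.exists_eq_add_of_le' hn
  have real_bound : 0 ≤ ε * -(1 / 3 * (2 / 3) ^ n) + (1 - ε) / 6 ^ (n + 1) := by
    have six_pow : (6 : ℝ) ^ (n + 1) = 2 ^ (n + 1) * 3 ^ (n + 1) := by rw [← mul_pow]; norm_num
    have hε' : ε * (1 + 2 ^ (2 * n + 1)) ≤ 1 := (le_div_iff₀ (by positivity)).mp hε
    calc 0 ≤ (1 - ε * (1 + 2 ^ (2 * n + 1))) / 6 ^ (n + 1) :=
          div_nonneg (sub_nonneg.mpr hε') (by positivity)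
      _ = ε * -(1 / 3 * (2 / 3) ^ n) + (1 - ε) / 6 ^ (n + 1) := by
        rw [six_pow, div_pow]
        field_simp
        ring
  calc (0 : ℂ) ≤ ((ε * -(1 / 3 * (2 / 3) ^ n) + (1 - ε) / 6 ^ (n + 1) : ℝ) : ℂ) :=
        Complex.zero_le_real.mpr real_bound
    _ = ε * -(1 / 3 * (2 / 3) ^ n) + (1 - ε) / 6 ^ (n + 1) := by push_cast; rfl
    _ ≤ octahedronWeight ε τ J := by
      rw [octahedronWeight]
      gcongr
      exact hτ.le_trace_mul (neg_smul_one_le_piKronecker_octahedronDual J)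

end Octahedron

theorem pps_separable_general (n : ℕ) (hn : 1 ≤ n)
    (τ : Matrix (Fin n → Fin 2) (Fin n → Fin 2) ℂ) (hτ : IsDensityMatrix τ) (ε : ℝ) (hε0 : 0 ≤ ε)
    (hε : ε ≤ 1 / (1 + 2 ^ (2 * n - 1))) :
    IsSeparableState n ((ε : ℂ) • τ + (((1 - ε) / 2 ^ n : ℝ) : ℂ) • 1) := by
  rw [← sum_octahedronWeight_smul]
  refine isSeparableState_sum_smul (octahedronWeight_nonneg hn hε0 hε hτ)
    (fun J ↦ isProductState_piKronecker fun i ↦ isDensityMatrix_octahedronState (J i)) ?_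
  rw [sum_octahedronWeight_smul]
  simp [hτ.2]

/-- Braunstein et al.: for any unit vector `ψ` on `n` qubits, the pseudo-pure state
`ε ψψ* + (1-ε) 2^{-n} I` is separable whenever `0 ≤ ε < 1/(1 + 2^(2n-1))`. -/
theorem pps_separable (n : ℕ) (hn : 1 ≤ n) (ψ : (Fin n → Fin 2) → ℂ)
    (hψ : ∑ x, ‖ψ x‖ ^ 2 = 1) (ε : ℝ) (hε0 : 0 ≤ ε)
    (hε : ε < 1 / (1 + 2 ^ (2 * n - 1))) :
    IsSeparableState n
      ((ε : ℂ) • vecMulVec ψ (star ψ) + (((1 - ε) / 2 ^ n : ℝ) : ℂ) • 1) :=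
  pps_separable_general n hn _ (isDensityMatrix_vecMulVec_star hψ) ε hε0 hε.le
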